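/- Let K be a field of characteristic zero, α, β ∈ K with β ≠ 0, and suppose λ, μ ∈ K are the roots of t² − αt − β. In A = A(α,β,1) set ω = DU − λUD, a = (ω + μ⁻¹)(1 + U) − μ⁻¹ and b = ω² + μ⁻¹ω. Then the right ideal aA + bA of A is stably free but not free as a right A-module. -/

import Mathlib

noncomputable section

/-- Defining relations of the down-up algebra `A(α,β,γ)`:
`D = ι 0`, `U = ι 1`, relations `DU² = αUDU + βU²D + γU` and `D²U = αDUD + βUD² + γD`. -/
inductive DownUpRel (K : Type) [Field K] (a b g : K) :
    FreeAlgebra K (Fin 2) → FreeAlgebra K (Fin 2) → Prop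
  | rel1 : DownUpRel K a b g
      (FreeAlgebra.ι K (0 : Fin 2) * FreeAlgebra.ι K (1 : Fin 2) * FreeAlgebra.ι K (1 : Fin 2))
      (a • (FreeAlgebra.ι K (1 : Fin 2) * FreeAlgebra.ι K (0 : Fin 2) * FreeAlgebra.ι K (1 : Fin 2)) +
       b • (FreeAlgebra.ι K (1 : Fin 2) * FreeAlgebra.ι K (1 : Fin 2) * FreeAlgebra.ι K (0 : Fin 2)) +
       g • FreeAlgebra.ι K (1 : Fin 2))
  | rel2 : DownUpRel K a b g
      (FreeAlgebra.ι K (0 : Fin 2) * FreeAlgebra.ι K (0 : Fin 2) * FreeAlgebra.ι K (1 : Fin 2))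
      (a • (FreeAlgebra.ι K (0 : Fin 2) * FreeAlgebra.ι K (1 : Fin 2) * FreeAlgebra.ι K (0 : Fin 2)) +
       b • (FreeAlgebra.ι K (1 : Fin 2) * FreeAlgebra.ι K (0 : Fin 2) * FreeAlgebra.ι K (0 : Fin 2)) +
       g • FreeAlgebra.ι K (0 : Fin 2))

/-- The down-up algebra `A(α,β,γ)`. -/
abbrev DownUp (K : Type) [Field K] (a b g : K) := RingQuot (DownUpRel K a b g)

/-- The generator `D` of `A(α,β,γ)`. -/
def DownUp.D (K : Type) [Field K] (a b g : K) : DownUp K a b g :=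
  RingQuot.mkAlgHom K (DownUpRel K a b g) (FreeAlgebra.ι K (0 : Fin 2))

/-- The generator `U` of `A(α,β,γ)`. -/
def DownUp.U (K : Type) [Field K] (a b g : K) : DownUp K a b g :=
  RingQuot.mkAlgHom K (DownUpRel K a b g) (FreeAlgebra.ι K (1 : Fin 2))

/-- A right `A`-module `P` (realized as a left `Aᵐᵒᵖ`-module) is stably free if
`P ⊕ Aⁿ ≅ Aᵐ` as right `A`-modules for some naturals `n m`. -/
def IsStablyFreeRight (A : Type) [Ring A] (P : Type) [AddCommGroup P] [Module Aᵐᵒᵖ P] : Prop :=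
  ∃ n m : ℕ, Nonempty ((P × (Fin n → A)) ≃ₗ[Aᵐᵒᵖ] (Fin m → A))

/-!
Let `ω = DU - λUD`, `c = γμ⁻¹` and `s = ω + c`. The defining relations of `A = A(α,β,γ)` say that
`U(μω + γ) = ωU` and `Dω = (μω + γ)D`, so `ω` commutes with `x = UD`, and `Us = ω(μ⁻¹U)`. The ideal
is generated by `a = ω + sU` and `b = ωs`; since `s - ω` is the unit `c`, the syzygy
`as = b(1 + μ⁻¹U)` is unimodular, generates all syzygies of `(a, b)`, and splits off:
`(aA + bA) ⊕ A ≅ A²`.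

Rank is well defined over `A` because `U, D ↦ 0` maps `A` to `K`, so if `aA + bA` were free it would
be principal. Sending `U` to `t` embeds `A` into a skew Laurent polynomial ring
`K[ω, x][t, t⁻¹; σ]`, where `aA + bA` would still generate a principal right ideal. A generator
divides the homogeneous element `ωs`, so it is itself homogeneous; as it also divides `ω + st` with
`ω` and `s` coprime, it is a unit. But if `(ω + st)f + ωsg = 1`, then, since `σ(s) = μ⁻¹ω` divides
`ω`, the divisibility of `f_{n+1}` by `s` implies that of `f_n` for all `n ≥ 0`. As `f` has finite
support, `s` divides `f₀`, hence also `1`, which is absurd.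
-/

section StablyFree

open MulOpposite Submodule

theorem invariantBasisNumber_of_ringHom {A k : Type*} [Ring A] [Ring k] [InvariantBasisNumber k]
    (ε : A →+* k) : InvariantBasisNumber A := by
  refine invariantBasisNumber_iff_matrix.2 fun n m f g hfg hgf ↦
    invariantBasisNumber_iff_matrix.1 ‹InvariantBasisNumber k› n m (f.map ε) (g.map ε) ?_ ?_
  · rw [← Matrix.map_mul, hfg, Matrix.map_one _ ε.map_zero ε.map_one]
  · rw [← Matrix.map_mul, hgf, Matrix.map_one _ ε.map_zero ε.map_one]

theorem nonempty_linearEquiv_of_prod_linearEquiv {S M : Type*} [Ring S] [InvariantBasisNumber S]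
    [AddCommGroup M] [Module S M] [Module.Free S M] (e : (M × S) ≃ₗ[S] S × S) :
    Nonempty (M ≃ₗ[S] S) := by
  let b := Module.Free.chooseBasis S M
  let bS := Module.Basis.singleton Unit S
  have index : Module.Free.ChooseBasisIndex S M ⊕ Unit ≃ Unit ⊕ Unit :=
    ((b.prod bS).map e).indexEquiv (bS.prod bS)
  have : Finite (Module.Free.ChooseBasisIndex S M ⊕ Unit) := .of_equiv _ index.symm
  have : Finite (Module.Free.ChooseBasisIndex S M) :=
    .of_injective (Sum.inl : _ → _ ⊕ Unit) Sum.inl_injective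
  have card : Nat.card (Module.Free.ChooseBasisIndex S M) = Nat.card Unit := by
    simpa [Nat.card_sum] using Nat.card_congr index
  obtain ⟨single⟩ := Finite.card_eq.1 card
  exact ⟨b.equiv bS single⟩

variable {A : Type*} [Ring A]

/-- The regular right module, as a left module over the opposite ring, is the regular left module
of the opposite ring. -/
def opSelfLinearEquiv (A : Type*) [Ring A] : A ≃ₗ[Aᵐᵒᵖ] Aᵐᵒᵖ where
  __ := opAddEquiv
  map_smul' _ _ := rfl

theorem isPrincipal_of_free_of_prod_linearEquiv [InvariantBasisNumber A]
    (P : Submodule Aᵐᵒᵖ A) [Module.Free Aᵐᵒᵖ P] (e : (P × A) ≃ₗ[Aᵐᵒᵖ] A × A) :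
    P.IsPrincipal := by
  let o := opSelfLinearEquiv A
  obtain ⟨u⟩ := nonempty_linearEquiv_of_prod_linearEquiv
    ((LinearEquiv.refl _ P).prodCongr o.symm ≪≫ₗ e ≪≫ₗ o.prodCongr o)
  have range_eq : (P.subtype ∘ₗ u.symm.toLinearMap).range = P := by
    rw [LinearMap.range_comp_of_range_eq_top _ u.symm.range, P.range_subtype]
  exact range_eq ▸ map_top (P.subtype ∘ₗ u.symm.toLinearMap) ▸
    Submodule.IsPrincipal.map _ inferInstance

theorem mem_span_op_pair {a b x : A} :
    x ∈ span Aᵐᵒᵖ {a, b} ↔ ∃ f g, a * f + b * g = x := by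
  simp [mem_span_pair, MulOpposite.exists]

theorem span_op_pair_isPrincipal_iff {a b : A} :
    (span Aᵐᵒᵖ {a, b}).IsPrincipal ↔
      ∃ f g p q, a = (a * f + b * g) * p ∧ b = (a * f + b * g) * q := by
  constructor
  · rintro ⟨p, hp⟩
    obtain ⟨f, g, rfl⟩ := mem_span_op_pair.1 (hp ▸ mem_span_singleton_self p)
    have mem {x : A} (hx : x ∈ span Aᵐᵒᵖ {a, b}) : ∃ q, x = (a * f + b * g) * q := by
      obtain ⟨q, rfl⟩ := mem_span_singleton.1 (hp ▸ hx)
      exact ⟨q.unop, rfl⟩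
    obtain ⟨p, ha⟩ := mem (subset_span (.inl rfl))
    obtain ⟨q, hb⟩ := mem (subset_span (.inr rfl))
    exact ⟨f, g, p, q, ha, hb⟩
  · rintro ⟨f, g, p, q, ha, hb⟩
    refine ⟨a * f + b * g, le_antisymm (span_le.2 ?_) ?_⟩
    · rintro x (rfl | rfl)
      · exact mem_span_singleton.2 ⟨op p, ha.symm⟩
      · exact mem_span_singleton.2 ⟨op q, hb.symm⟩
    · exact (span_singleton_le_iff_mem _ _).2 (mem_span_op_pair.2 ⟨f, g, rfl⟩)

theorem span_op_pair_isPrincipal_map {B : Type*} [Ring B] (ψ : A →+* B) {a b : A}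
    (h : (span Aᵐᵒᵖ {a, b}).IsPrincipal) : (span Bᵐᵒᵖ {ψ a, ψ b}).IsPrincipal := by
  obtain ⟨f, g, p, q, ha, hb⟩ := span_op_pair_isPrincipal_iff.1 h
  refine span_op_pair_isPrincipal_iff.2 ⟨ψ f, ψ g, ψ p, ψ q, ?_, ?_⟩
  · simpa using congr_arg ψ ha
  · simpa using congr_arg ψ hb

theorem nonempty_span_op_pair_prod_linearEquiv {a b v₁ v₂ w₁ w₂ : A}
    (hv : a * v₁ + b * v₂ = 0) (hw : w₁ * v₁ + w₂ * v₂ = 1)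
    (syzygy : ∀ f g, a * f + b * g = 0 →
      v₁ * (w₁ * f + w₂ * g) = f ∧ v₂ * (w₁ * f + w₂ * g) = g) :
    Nonempty ((span Aᵐᵒᵖ {a, b} × A) ≃ₗ[Aᵐᵒᵖ] A × A) := by
  let L := LinearMap.mulLeft Aᵐᵒᵖ (A := A)
  let π : A × A →ₗ[Aᵐᵒᵖ] span Aᵐᵒᵖ {a, b} := ((L a).coprod (L b)).codRestrict _ fun x ↦
    mem_span_op_pair.2 ⟨x.1, x.2, rfl⟩
  have exact_pair : Function.Exact ((L v₁).prod (L v₂)) π := by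
    rintro ⟨f, g⟩
    constructor
    · intro h
      obtain ⟨hf, hg⟩ := syzygy f g (congr_arg Subtype.val h)
      exact ⟨w₁ * f + w₂ * g, Prod.ext hf hg⟩
    · rintro ⟨c, hc⟩
      obtain ⟨rfl, rfl⟩ := Prod.ext_iff.1 hc
      refine Subtype.ext (?_ : a * (v₁ * c) + b * (v₂ * c) = 0)
      rw [← mul_assoc, ← mul_assoc, ← add_mul, hv, zero_mul]
  have surj : Function.Surjective π := by
    rintro ⟨x, hx⟩
    obtain ⟨f, g, rfl⟩ := mem_span_op_pair.1 hx
    exact ⟨(f, g), rfl⟩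
  have retract : (L w₁).coprod (L w₂) ∘ₗ (L v₁).prod (L v₂) = .id := by
    ext
    simpa [L] using hw
  exact ⟨LinearEquiv.prodComm _ _ _ ≪≫ₗ (exact_pair.splitInjectiveEquiv surj ⟨_, retract⟩).1.symm⟩

/-- With `a = r + sU` and `b = rs`, the relation `Us = rV` produces the syzygy `(s, -(1 + V))`,
which is unimodular because `r` and `s` differ by a unit. -/
theorem nonempty_span_add_mul_prod_linearEquiv {r s U V d : A} (hrs : Commute r s)
    (hsd : Commute s d) (hd : d * (s - r) = 1) (hUV : U * s = r * V)
    (hreg : IsLeftRegular (r * s)) :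
    Nonempty ((span Aᵐᵒᵖ {r + s * U, r * s} × A) ≃ₗ[Aᵐᵒᵖ] A × A) := by
  have hv : (r + s * U) * s = r * s * (1 + V) := by
    rw [add_mul, mul_assoc, hUV, ← mul_assoc, ← hrs.eq, mul_add, mul_one]
  have hw : d * (1 + U) * s - d * r * (1 + V) = 1 := by
    rw [mul_assoc, mul_assoc, ← mul_sub, add_mul, hUV, mul_add, one_mul, mul_one,
      add_sub_add_right_eq_sub, hd]
  refine nonempty_span_op_pair_prod_linearEquiv (v₁ := s) (v₂ := -(1 + V)) (w₁ := d * (1 + U))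
    (w₂ := d * r) ?_ ?_ fun f g hfg ↦ ?_
  · rw [hv, mul_neg, add_neg_cancel]
  · rw [mul_neg, ← sub_eq_add_neg, hw]
  · have fst_eq : s * (d * (1 + U) * f + d * r * g) = f := by
      calc s * (d * (1 + U) * f + d * r * g)
          = d * (s * (1 + U) * f + s * r * g) := by
            simp only [mul_add, ← mul_assoc, hsd.eq]
        _ = d * ((s - r) * f + ((r + s * U) * f + r * s * g)) := by
            rw [hrs.eq]; noncomm_ring
        _ = f := by rw [hfg, add_zero, ← mul_assoc, hd, one_mul]
    refine ⟨fst_eq, hreg ?_⟩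
    calc r * s * (-(1 + V) * (d * (1 + U) * f + d * r * g))
        = -((r + s * U) * (s * (d * (1 + U) * f + d * r * g))) := by
          rw [neg_mul, mul_neg, ← mul_assoc, ← mul_assoc, ← hv]
      _ = r * s * g := by rw [fst_eq, eq_neg_of_add_eq_zero_left hfg, neg_neg]

theorem isStablyFreeRight_of_prod_linearEquiv {A P : Type} [Ring A] [AddCommGroup P]
    [Module Aᵐᵒᵖ P] (e : (P × A) ≃ₗ[Aᵐᵒᵖ] A × A) : IsStablyFreeRight A P :=
  ⟨1, 2, ⟨(LinearEquiv.refl _ P).prodCongr (.funUnique (Fin 1) Aᵐᵒᵖ A) ≪≫ₗ e ≪≫ₗ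
    (LinearEquiv.finTwoArrow Aᵐᵒᵖ A).symm⟩⟩

end StablyFree

section SkewMonoidAlgebra

open SkewMonoidAlgebra

theorem coeff_mul_of_uniqueMul {R G : Type*} [Semiring R] [Mul G] [SMulZeroClass G R]
    {p q : SkewMonoidAlgebra R G} {x y : G} (h : UniqueMul p.support q.support x y) :
    (p * q).coeff (x * y) = p.coeff x * x • q.coeff y := by
  classical
  simp_rw [coeff_mul, sum_def', ← Finset.sum_product']
  refine (Finset.sum_eq_single (x, y) ?_ ?_).trans (if_pos rfl) <;> simp_rw [Finset.mem_product]
  · exact fun z hz hne ↦ if_neg fun eq ↦ hne (Prod.ext_iff.2 (h hz.1 hz.2 eq))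
  · intro hxy
    rcases not_and_or.1 hxy with hx | hy
    · rw [notMem_support_iff.1 hx, zero_mul, ite_self]
    · rw [notMem_support_iff.1 hy, smul_zero, mul_zero, ite_self]

variable {R G : Type*} [CommRing R] [Group G] [MulSemiringAction G R]

theorem exists_single_pow_eq_single [IsDomain R] (g : G) {r : R} (hr : r ≠ 0) (n : ℕ) :
    ∃ c ≠ 0, single g r ^ n = single (g ^ n) c := by
  induction n with
  | zero => exact ⟨1, one_ne_zero, by rw [pow_zero, pow_zero, single_one_one]⟩
  | succ n ih =>
    obtain ⟨c, hc, h⟩ := ih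
    refine ⟨c * g ^ n • r, mul_ne_zero hc ((smul_ne_zero_iff_ne _).2 hr), ?_⟩
    rw [pow_succ, pow_succ, h, single_mul_single]

theorem isLeftRegular_single_one [NoZeroDivisors R] {r : R} (hr : r ≠ 0) :
    IsLeftRegular (single 1 r : SkewMonoidAlgebra R G) := by
  refine isLeftRegular_iff_right_eq_zero_of_mul.2 fun f hf ↦ ext fun x ↦ ?_
  have := congr_arg (fun p ↦ p.coeff x) hf
  simpa [coeff_single_one_mul, hr] using this

theorem exists_eq_single_of_mul_eq_single [NoZeroDivisors R] [TwoUniqueProds G]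
    {p q : SkewMonoidAlgebra R G} {g : G} {c : R} (hc : c ≠ 0) (h : p * q = single g c) :
    ∃ d r, p = single d r := by
  classical
  have mem_eq {x y : G} (hx : x ∈ p.support) (hy : y ∈ q.support)
      (hu : UniqueMul p.support q.support x y) : x * y = g := by
    have hne : (p * q).coeff (x * y) ≠ 0 := by
      rw [coeff_mul_of_uniqueMul hu]
      exact mul_ne_zero (mem_support_iff.1 hx)
        ((smul_ne_zero_iff_ne x).2 (mem_support_iff.1 hy))
    by_contra hxy
    exact hne (by rw [h, coeff_single_apply, if_neg (Ne.symm hxy)])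
  have hpq : p * q ≠ 0 := h ▸ mt single_eq_zero.1 hc
  have hp : p.support.card ≠ 0 := by simpa using left_ne_zero_of_mul hpq
  have hq : q.support.card ≠ 0 := by simpa using right_ne_zero_of_mul hpq
  have card_le : p.support.card * q.support.card ≤ 1 := by
    by_contra! one_lt
    obtain ⟨x, hx, y, hy, hne, hux, huy⟩ := TwoUniqueProds.uniqueMul_of_one_lt_card one_lt
    rw [Finset.mem_product] at hx hy
    have eq := (mem_eq hx.1 hx.2 hux).trans (mem_eq hy.1 hy.2 huy).symm
    exact hne (Prod.ext_iff.2 (huy hx.1 hx.2 eq))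
  obtain ⟨d, hd⟩ := Finset.card_eq_one.1
    (show p.support.card = 1 by nlinarith [Nat.pos_of_ne_zero hp, Nat.pos_of_ne_zero hq])
  refine ⟨d, p.coeff d, ext fun x ↦ ?_⟩
  rw [coeff_single_apply]
  split_ifs with hx
  · rw [hx]
  · exact notMem_support_iff.1 (by simpa [hd] using Ne.symm hx)

theorem eventually_coeff_pow_eq_zero {R G : Type*} [AddMonoid R] [Group G] {t : G}
    (ht : ¬IsOfFinOrder t) (f : SkewMonoidAlgebra R G) :
    ∀ᶠ n : ℕ in Filter.atTop, f.coeff (t ^ n) = 0 := by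
  rw [← Nat.cofinite_eq_atTop]
  refine (f.support.finite_toSet.preimage
    (injective_pow_iff_not_isOfFinOrder.2 ht).injOn).subset fun n hn ↦ ?_
  exact mem_support_iff.2 hn

/-- Comparing coefficients at `t ^ (n + 1)` propagates divisibility by `s` downwards through the
coefficients of `f`, starting from the vanishing ones; at `1` it then says that `s` divides `1`. -/
theorem isUnit_of_unimodular [IsDomain R] {t : G} (ht : ¬IsOfFinOrder t) {r s : R} (hs : s ≠ 0)
    (hsr : t • s ∣ r) {f g : SkewMonoidAlgebra R G}
    (h : (single 1 r + single t s) * f + single 1 (r * s) * g = 1) : IsUnit s := by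
  have coeff_eq (x : G) : r * f.coeff x + s * t • f.coeff (t⁻¹ * x) + r * s * g.coeff x =
      Finsupp.single (1 : G) (1 : R) x := by
    simpa [add_mul, coeff_single_mul] using congr_arg (fun p ↦ p.coeff x) h
  have dvd_of_succ (n : ℕ) (hn : s ∣ f.coeff (t ^ (n + 1))) : s ∣ f.coeff (t ^ n) := by
    obtain ⟨c, hc⟩ := hn
    have ne_one : t ^ (n + 1) ≠ 1 := fun eq ↦
      ht (isOfFinOrder_iff_pow_eq_one.2 ⟨n + 1, n.succ_pos, eq⟩)
    have eq := coeff_eq (t ^ (n + 1))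
    rw [Finsupp.single_eq_of_ne ne_one, hc, pow_succ', inv_mul_cancel_left] at eq
    have smul_eq : t • f.coeff (t ^ n) = r * -(c + g.coeff (t * t ^ n)) :=
      mul_left_cancel₀ hs (by linear_combination eq)
    have dvd := hsr.trans (Dvd.intro _ smul_eq.symm)
    simpa using map_dvd (MulSemiringAction.toRingHom G R t⁻¹) dvd
  have dvd_coeff_one : s ∣ f.coeff 1 := by
    have := Nat.decreasing_induction_of_infinite dvd_of_succ
      (Nat.frequently_atTop_iff_infinite.1
        ((eventually_coeff_pow_eq_zero ht f).mono fun n hn ↦ hn ▸ dvd_zero s).frequently) 0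
    rwa [pow_zero] at this
  have eq := coeff_eq 1
  rw [Finsupp.single_eq_same, mul_one] at eq
  refine isUnit_of_dvd_one (eq ▸ ?_)
  exact ((dvd_coeff_one.mul_left r).add (dvd_mul_right s _)).add
    ((dvd_mul_left s r).mul_right _)

/-- A generator would divide the homogeneous element `rs`, hence be homogeneous; dividing both
homogeneous components of `r + s t` it would then be a unit. -/
theorem isUnit_of_span_op_pair_isPrincipal [IsDomain R] [TwoUniqueProds G] {t : G}
    (ht : ¬IsOfFinOrder t) {r s : R} (hr : r ≠ 0) (hs : s ≠ 0) (hrs : IsRelPrime r s)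
    (hsr : t • s ∣ r)
    (h : (Submodule.span (SkewMonoidAlgebra R G)ᵐᵒᵖ
      {single 1 r + single t s, single 1 (r * s)}).IsPrincipal) : IsUnit s := by
  obtain ⟨f, g, p, q, ha, hb⟩ := span_op_pair_isPrincipal_iff.1 h
  obtain ⟨d, c, hdc⟩ := exists_eq_single_of_mul_eq_single (mul_ne_zero hr hs) hb.symm
  rw [hdc] at ha
  have coeff_eq (x : G) : (single 1 r + single t s : SkewMonoidAlgebra R G).coeff x =
      c * d • p.coeff (d⁻¹ * x) := by
    rw [ha, coeff_single_mul]
  have one_ne : t ≠ 1 := fun eq ↦ ht (eq ▸ .one)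
  have dvd_r : c ∣ r := Dvd.intro _ (by simpa [one_ne] using (coeff_eq 1).symm)
  have dvd_s : c ∣ s := Dvd.intro _ (by simpa [one_ne.symm] using (coeff_eq t).symm)
  obtain ⟨c, rfl⟩ := hrs dvd_r dvd_s
  obtain ⟨i, hi⟩ : ∃ i : SkewMonoidAlgebra R G, single d (c : R) * i = 1 :=
    ⟨single d⁻¹ (d⁻¹ • (↑c⁻¹ : R)), by simp [single_mul_single]⟩
  refine isUnit_of_unimodular ht hs hsr (f := f * i) (g := g * i) ?_
  rw [← mul_assoc, ← mul_assoc, ← add_mul, hdc, hi]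

end SkewMonoidAlgebra

section ShiftGroup

variable {K R : Type*} [CommSemiring K] [CommRing R] [Algebra K R]

/-- The infinite cyclic group acting on `R` through the powers of `σ`. It is a type synonym
carrying `σ`, so that the skew group ring `SkewMonoidAlgebra R (ShiftGroup σ)` is the skew Laurent
polynomial ring `R[t, t⁻¹; σ]`, even if `σ` has finite order. -/
def ShiftGroup (_σ : R ≃ₐ[K] R) : Type := Multiplicative ℤ

namespace ShiftGroup

variable (σ : R ≃ₐ[K] R)

instance : CommGroup (ShiftGroup σ) := inferInstanceAs (CommGroup (Multiplicative ℤ))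

instance : TwoUniqueProds (ShiftGroup σ) := inferInstanceAs (TwoUniqueProds (Multiplicative ℤ))

instance : MulSemiringAction (ShiftGroup σ) R := .compHom R (zpowersHom (R ≃ₐ[K] R) σ)

instance : SMulCommClass (ShiftGroup σ) K R where
  smul_comm g k r := map_smul (zpowersHom (R ≃ₐ[K] R) σ g) k r

/-- The generator `t` of `ShiftGroup σ`, acting on `R` as `σ`. -/
def gen : ShiftGroup σ := Multiplicative.ofAdd (1 : ℤ)

theorem gen_smul (r : R) : gen σ • r = σ r := rfl

theorem gen_inv_smul (r : R) : (gen σ)⁻¹ • r = σ.symm r := rfl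

theorem gen_zpow_injective : Function.Injective fun n : ℤ ↦ gen σ ^ n := by
  intro m n h
  have ofAdd_eq (k : ℤ) : gen σ ^ k = Multiplicative.ofAdd (k • (1 : ℤ)) := (ofAdd_zsmul k 1).symm
  simpa [ofAdd_eq] using congr_arg Multiplicative.toAdd h

theorem not_isOfFinOrder_gen : ¬IsOfFinOrder (gen σ) :=
  injective_zpow_iff_not_isOfFinOrder.1 (gen_zpow_injective σ)

end ShiftGroup

end ShiftGroup

section DownUpPair

open MvPolynomial

open scoped IsMulCommutative in
theorem exists_algHom_mvPolynomial_of_commute {K A ι : Type*} [CommRing K] [Ring A] [Algebra K A]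
    (x : ι → A) (hx : ∀ i j, Commute (x i) (x j)) :
    ∃ e : MvPolynomial ι K →ₐ[K] A, ∀ i, e (X i) = x i := by
  have comm : ∀ a ∈ Set.range x, ∀ b ∈ Set.range x, a * b = b * a := by
    rintro _ ⟨i, rfl⟩ _ ⟨j, rfl⟩
    exact hx i j
  have := Algebra.isMulCommutative_adjoin K comm
  exact ⟨(Algebra.adjoin K (Set.range x)).val.comp
    (aeval fun i ↦ ⟨x i, Algebra.subset_adjoin ⟨i, rfl⟩⟩), fun i ↦ by simp⟩

theorem semiconjBy_of_forall_X {K A ι : Type*} [CommRing K] [Ring A] [Algebra K A]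
    {e e' : MvPolynomial ι K →ₐ[K] A} {a : A} (h : ∀ i, SemiconjBy a (e (X i)) (e' (X i)))
    (p : MvPolynomial ι K) : SemiconjBy a (e p) (e' p) := by
  induction p using MvPolynomial.induction_on with
  | C c =>
    rw [← algebraMap_eq, e.commutes, e'.commutes]
    exact Algebra.commute_algebraMap_right c a
  | add p q hp hq => simpa using hp.add_right hq
  | mul_X p i hp => simpa using hp.mul_right (h i)

/-- The defining relations of `A(α,β,γ)` for elements `D` and `U` of an arbitrary algebra. -/
structure IsDownUpPair {K A : Type*} [CommRing K] [Ring A] [Algebra K A] (α β γ : K) (D U : A) :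
    Prop where
  down_up_up : D * U * U = α • (U * D * U) + β • (U * U * D) + γ • U
  down_down_up : D * D * U = α • (D * U * D) + β • (U * D * D) + γ • D

/-- The element `ω = DU - λUD`. -/
def omega {K A : Type*} [CommRing K] [Ring A] [Algebra K A] (lam : K) (D U : A) : A :=
  D * U - lam • (U * D)

section Relations

variable {K A : Type*} [CommRing K] [Ring A] [Algebra K A] {lam μ γ : K} {D U : A}

theorem omega_add_smul : omega lam D U + lam • (U * D) = D * U :=
  sub_add_cancel _ _

theorem isDownUpPair_iff_semiconjBy_omega :
    IsDownUpPair (lam + μ) (-(lam * μ)) γ D U ↔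
      SemiconjBy U (μ • omega lam D U + algebraMap K A γ) (omega lam D U) ∧
        SemiconjBy D (omega lam D U) (μ • omega lam D U + algebraMap K A γ) := by
  have up_sub : omega lam D U * U - U * (μ • omega lam D U + algebraMap K A γ) =
      D * U * U - ((lam + μ) • (U * D * U) + -(lam * μ) • (U * U * D) + γ • U) := by
    simp only [omega, Algebra.algebraMap_eq_smul_one, sub_mul, mul_add, mul_sub, mul_smul_comm,
      smul_mul_assoc, mul_one, ← mul_assoc]
    module
  have down_sub : D * omega lam D U - (μ • omega lam D U + algebraMap K A γ) * D =
      D * D * U - ((lam + μ) • (D * U * D) + -(lam * μ) • (U * D * D) + γ • D) := by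
    simp only [omega, Algebra.algebraMap_eq_smul_one, sub_mul, add_mul, mul_sub, mul_smul_comm,
      smul_mul_assoc, one_mul, ← mul_assoc]
    module
  constructor
  · intro h
    exact ⟨(sub_eq_zero.1 (up_sub.trans (sub_eq_zero.2 h.down_up_up))).symm,
      sub_eq_zero.1 (down_sub.trans (sub_eq_zero.2 h.down_down_up))⟩
  · rintro ⟨hU, hD⟩
    exact ⟨sub_eq_zero.1 (up_sub.symm.trans (sub_eq_zero.2 hU.symm)),
      sub_eq_zero.1 (down_sub.symm.trans (sub_eq_zero.2 hD))⟩

theorem IsDownUpPair.commute_omega (h : IsDownUpPair (lam + μ) (-(lam * μ)) γ D U) :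
    Commute (omega lam D U) (U * D) := by
  obtain ⟨hU, hD⟩ := isDownUpPair_iff_semiconjBy_omega.1 h
  exact (hU.mul_left hD).symm

theorem IsDownUpPair.exists_algHom (h : IsDownUpPair (lam + μ) (-(lam * μ)) γ D U) :
    ∃ e : MvPolynomial (Fin 2) K →ₐ[K] A, e (X 0) = omega lam D U ∧ e (X 1) = U * D := by
  obtain ⟨e, he⟩ := exists_algHom_mvPolynomial_of_commute (K := K) ![omega lam D U, U * D] (by
    simp [Fin.forall_fin_two, h.commute_omega, h.commute_omega.symm])
  exact ⟨e, he 0, he 1⟩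

end Relations

section Twist

/-- The automorphism `φ` of `K[ω, x]` with `Dp = φ(p)D` and `pU = Uφ(p)` in `A(λ + μ, -λμ, γ)`,
where `x = UD`. -/
def twist {K : Type*} [CommRing K] (lam μ : Kˣ) (γ : K) :
    MvPolynomial (Fin 2) K ≃ₐ[K] MvPolynomial (Fin 2) K :=
  .ofAlgHom (aeval ![(μ : K) • X 0 + C γ, X 0 + (lam : K) • X 1])
    (aeval ![(↑μ⁻¹ : K) • (X 0 - C γ), (↑lam⁻¹ : K) • (X 1 - (↑μ⁻¹ : K) • (X 0 - C γ))])
    (by ext i : 1; fin_cases i <;> simp [smul_smul, ← algebraMap_eq])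
    (by ext i : 1; fin_cases i <;> simp [smul_smul, ← algebraMap_eq])

variable {K A : Type*} [CommRing K] [Ring A] [Algebra K A] {lam μ : Kˣ} {γ : K} {D U : A}

theorem twist_X_zero : twist lam μ γ (X 0) = (μ : K) • X 0 + C γ := by
  simp [twist]

theorem twist_X_one : twist lam μ γ (X 1) = X 0 + (lam : K) • X 1 := by
  simp [twist]

theorem symm_twist_X_zero_add_C :
    (twist lam μ γ).symm (X 0 + C (γ * ↑μ⁻¹)) = (↑μ⁻¹ : K) • X 0 := by
  rw [AlgEquiv.symm_apply_eq, map_smul, twist_X_zero, smul_add, smul_smul, Units.inv_mul, one_smul,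
    smul_eq_C_mul, ← C_mul, mul_comm γ]

variable {e : MvPolynomial (Fin 2) K →ₐ[K] A}

theorem map_twist_X_zero (hω : e (X 0) = omega (lam : K) D U) :
    e (twist lam μ γ (X 0)) = (μ : K) • omega (lam : K) D U + algebraMap K A γ := by
  rw [twist_X_zero, map_add, map_smul, hω, ← algebraMap_eq, e.commutes]

theorem map_twist_X_one (hω : e (X 0) = omega (lam : K) D U) (hx : e (X 1) = U * D) :
    e (twist lam μ γ (X 1)) = D * U := by
  rw [twist_X_one, map_add, map_smul, hω, hx, omega_add_smul]

theorem IsDownUpPair.semiconjBy_up (h : IsDownUpPair (lam + μ : K) (-(lam * μ)) γ D U)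
    (hω : e (X 0) = omega (lam : K) D U) (hx : e (X 1) = U * D) (p : MvPolynomial (Fin 2) K) :
    SemiconjBy U (e (twist lam μ γ p)) (e p) := by
  refine semiconjBy_of_forall_X (e := e.comp (twist lam μ γ : _ →ₐ[K] _))
    (Fin.forall_fin_two.2 ⟨?_, ?_⟩) p
  · simpa [map_twist_X_zero hω, hω] using (isDownUpPair_iff_semiconjBy_omega.1 h).1
  · have : SemiconjBy U (D * U) (U * D) := (mul_assoc U D U).symm
    simpa [map_twist_X_one hω hx, hx] using this

theorem IsDownUpPair.semiconjBy_down (h : IsDownUpPair (lam + μ : K) (-(lam * μ)) γ D U)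
    (hω : e (X 0) = omega (lam : K) D U) (hx : e (X 1) = U * D) (p : MvPolynomial (Fin 2) K) :
    SemiconjBy D (e p) (e (twist lam μ γ p)) := by
  refine semiconjBy_of_forall_X (e' := e.comp (twist lam μ γ : _ →ₐ[K] _))
    (Fin.forall_fin_two.2 ⟨?_, ?_⟩) p
  · simpa [map_twist_X_zero hω, hω] using (isDownUpPair_iff_semiconjBy_omega.1 h).2
  · have : SemiconjBy D (U * D) (D * U) := (mul_assoc D U D).symm
    simpa [map_twist_X_one hω hx, hx] using this

theorem semiconjBy_pow_iterate {P A : Type*} [Monoid A] {e : P → A} {f : P → P} {a : A}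
    (h : ∀ p, SemiconjBy a (e p) (e (f p))) (n : ℕ) (p : P) :
    SemiconjBy (a ^ n) (e p) (e (f^[n] p)) := by
  induction n with
  | zero => simp
  | succ n ih => simpa only [pow_succ', Function.iterate_succ_apply'] using (h _).mul_left ih

end Twist

section Monomials

variable {K A : Type*} [CommRing K] [Ring A] [Algebra K A] {lam μ : Kˣ} {γ : K} {D U : A}

/-- The monomials `Uⁿ` for `n ≥ 0` and `D⁻ⁿ` for `n ≤ 0`, which form a basis of `A(α,β,γ)` over
`K[ω, x]` acting from the left. -/
def upDownPow (D U : A) (n : ℤ) : A := U ^ n.toNat * D ^ (-n).toNat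

theorem upDownPow_natCast (n : ℕ) : upDownPow D U n = U ^ n := by
  simp [upDownPow]

theorem upDownPow_neg_natCast (n : ℕ) : upDownPow D U (-n) = D ^ n := by
  simp [upDownPow]

variable {e : MvPolynomial (Fin 2) K →ₐ[K] A}

theorem IsDownUpPair.exists_upDownPow_mul_up (h : IsDownUpPair (lam + μ : K) (-(lam * μ)) γ D U)
    (hω : e (X 0) = omega (lam : K) D U) (hx : e (X 1) = U * D) (n : ℤ) :
    ∃ q, upDownPow D U n * U = e q * upDownPow D U (n + 1) := by
  obtain ⟨n, rfl⟩ | ⟨n, rfl⟩ : (∃ m : ℕ, n = m) ∨ ∃ m : ℕ, n = -(m + 1 : ℕ) := by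
    rcases le_or_gt 0 n with hn | hn
    · exact .inl ⟨n.toNat, by lia⟩
    · exact .inr ⟨(-n - 1).toNat, by lia⟩
  · refine ⟨1, ?_⟩
    rw [map_one, one_mul, ← Nat.cast_succ, upDownPow_natCast, upDownPow_natCast, pow_succ]
  · refine ⟨(twist lam μ γ)^[n] (twist lam μ γ (X 1)), ?_⟩
    rw [show -((n + 1 : ℕ) : ℤ) + 1 = -n by simp, upDownPow_neg_natCast, upDownPow_neg_natCast,
      pow_succ, mul_assoc, ← map_twist_X_one hω hx]
    exact semiconjBy_pow_iterate (h.semiconjBy_down hω hx) n _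

theorem IsDownUpPair.exists_upDownPow_mul_down
    (h : IsDownUpPair (lam + μ : K) (-(lam * μ)) γ D U)
    (hω : e (X 0) = omega (lam : K) D U) (hx : e (X 1) = U * D) (n : ℤ) :
    ∃ q, upDownPow D U n * D = e q * upDownPow D U (n - 1) := by
  obtain ⟨n, rfl⟩ | ⟨n, rfl⟩ : (∃ m : ℕ, n = (m + 1 : ℕ)) ∨ ∃ m : ℕ, n = -m := by
    rcases lt_or_ge 0 n with hn | hn
    · exact .inl ⟨(n - 1).toNat, by lia⟩
    · exact .inr ⟨(-n).toNat, by lia⟩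
  · have up (p : MvPolynomial (Fin 2) K) : SemiconjBy U (e p) (e ((twist lam μ γ).symm p)) := by
      simpa using h.semiconjBy_up hω hx ((twist lam μ γ).symm p)
    refine ⟨(twist lam μ γ).symm^[n] (X 1), ?_⟩
    rw [show ((n + 1 : ℕ) : ℤ) - 1 = n by simp, upDownPow_natCast, upDownPow_natCast,
      pow_succ, mul_assoc, ← hx]
    exact semiconjBy_pow_iterate up n _
  · refine ⟨1, ?_⟩
    rw [map_one, one_mul, ← neg_add', ← Nat.cast_succ, upDownPow_neg_natCast,
      upDownPow_neg_natCast, pow_succ]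

end Monomials

end DownUpPair

section DownUpAlgebra

open MvPolynomial

namespace DownUp

variable {K : Type} [Field K] {α β γ : K}

theorem isDownUpPair : IsDownUpPair α β γ (D K α β γ) (U K α β γ) where
  down_up_up := by
    simpa [D, U, -neg_smul] using
      RingQuot.mkAlgHom_rel K (DownUpRel.rel1 (a := α) (b := β) (g := γ))
  down_down_up := by
    simpa [D, U, -neg_smul] using
      RingQuot.mkAlgHom_rel K (DownUpRel.rel2 (a := α) (b := β) (g := γ))

section Lift

variable {A : Type*} [Ring A] [Algebra K A] {d u : A}

/-- The universal property of `A(α,β,γ)`: the homomorphism with `D ↦ d` and `U ↦ u`. -/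
def lift (h : IsDownUpPair α β γ d u) : DownUp K α β γ →ₐ[K] A :=
  RingQuot.liftAlgHom K ⟨FreeAlgebra.lift K ![d, u], by
    rintro _ _ (_ | _)
    · simpa using h.down_up_up
    · simpa using h.down_down_up⟩

theorem lift_D (h : IsDownUpPair α β γ d u) : lift h (D K α β γ) = d := by
  simp [lift, D]

theorem lift_U (h : IsDownUpPair α β γ d u) : lift h (U K α β γ) = u := by
  simp [lift, U]

end Lift

instance : InvariantBasisNumber (DownUp K α β γ) :=
  have zero_pair : IsDownUpPair α β γ (0 : K) 0 := ⟨by simp, by simp⟩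
  invariantBasisNumber_of_ringHom (lift zero_pair : DownUp K α β γ →+* K)

theorem submodule_eq_top {N : Submodule K (DownUp K α β γ)} (one_mem : 1 ∈ N)
    (mul_D_mem : ∀ y ∈ N, y * D K α β γ ∈ N) (mul_U_mem : ∀ y ∈ N, y * U K α β γ ∈ N) :
    N = ⊤ := by
  have mul_mem (z : FreeAlgebra K (Fin 2)) :
      ∀ y ∈ N, y * RingQuot.mkAlgHom K (DownUpRel K α β γ) z ∈ N := by
    induction z using FreeAlgebra.induction with
    | grade0 c =>
      intro y hy
      rw [AlgHom.commutes, ← Algebra.commutes, ← Algebra.smul_def]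
      exact N.smul_mem c hy
    | grade1 i =>
      fin_cases i
      · exact mul_D_mem
      · exact mul_U_mem
    | mul z w hz hw =>
      intro y hy
      rw [map_mul, ← mul_assoc]
      exact hw _ (hz y hy)
    | add z w hz hw =>
      intro y hy
      rw [map_add, mul_add]
      exact N.add_mem (hz y hy) (hw y hy)
  refine Submodule.eq_top_iff'.2 fun x ↦ ?_
  obtain ⟨z, rfl⟩ := RingQuot.mkAlgHom_surjective K (DownUpRel K α β γ) x
  simpa using mul_mem z 1 one_mem

end DownUp

end DownUpAlgebra

section SkewLaurent

open MvPolynomial SkewMonoidAlgebra ShiftGroup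

/-- The down-up algebra `A(λ + μ, -λμ, γ)`, for which `λ` and `μ` are the roots of
`t² - αt - β`. -/
abbrev DownUpOfRoots {K : Type} [Field K] (lam μ : Kˣ) (γ : K) : Type :=
  DownUp K (lam + μ : K) (-(lam * μ)) γ

/-- The skew Laurent polynomial ring `K[ω, x][t, t⁻¹; φ⁻¹]`, with `φ` the automorphism `twist`; it
contains `A(λ + μ, -λμ, γ)`. -/
abbrev SkewLaurent {K : Type*} [CommRing K] (lam μ : Kˣ) (γ : K) : Type _ :=
  SkewMonoidAlgebra (MvPolynomial (Fin 2) K) (ShiftGroup (twist lam μ γ).symm)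

namespace SkewLaurent

variable {K : Type*} [CommRing K] (lam μ : Kˣ) (γ : K)

/-- The image `t` of `U` in the skew Laurent polynomial ring. -/
def up : SkewLaurent lam μ γ := single (gen _) 1

/-- The image `t⁻¹x` of `D` in the skew Laurent polynomial ring. -/
def down : SkewLaurent lam μ γ := single (gen _)⁻¹ (twist lam μ γ (X 1))

theorem up_mul_down : up lam μ γ * down lam μ γ = single 1 (X 1) := by
  simp [up, down, single_mul_single, gen_smul]

theorem down_mul_up : down lam μ γ * up lam μ γ = single 1 (twist lam μ γ (X 1)) := by
  simp [up, down, single_mul_single]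

theorem omega_down_up : omega (lam : K) (down lam μ γ) (up lam μ γ) = single 1 (X 0) := by
  rw [omega, down_mul_up, up_mul_down, smul_single, sub_eq_iff_eq_add, ← single_add, twist_X_one]

theorem isDownUpPair :
    IsDownUpPair (lam + μ : K) (-(lam * μ)) γ (down lam μ γ) (up lam μ γ) := by
  have twist_omega : (μ : K) • single 1 (X 0) + algebraMap K (SkewLaurent lam μ γ) γ =
      single 1 (twist lam μ γ (X 0)) := by
    simp [twist_X_zero, coe_algebraMap, single_add, smul_single, algebraMap_eq]
  rw [isDownUpPair_iff_semiconjBy_omega, omega_down_up, twist_omega]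
  constructor
  · simp [SemiconjBy, up, single_mul_single, gen_smul]
  · simp [SemiconjBy, down, single_mul_single, gen_inv_smul, mul_comm]

end SkewLaurent

namespace DownUp

variable {K : Type} [Field K] (lam μ : Kˣ) (γ : K)

/-- The embedding of `A(λ + μ, -λμ, γ)` into the skew Laurent polynomial ring. -/
def toSkewLaurent : DownUpOfRoots lam μ γ →ₐ[K] SkewLaurent lam μ γ :=
  lift (SkewLaurent.isDownUpPair lam μ γ)

theorem toSkewLaurent_U : toSkewLaurent lam μ γ (U _ _ _ _) = single (gen _) 1 :=
  lift_U _

theorem toSkewLaurent_omega :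
    toSkewLaurent lam μ γ (omega (lam : K) (D _ _ _ _) (U _ _ _ _)) = single 1 (X 0) := by
  rw [← SkewLaurent.omega_down_up]
  simp [omega, toSkewLaurent, lift_D, lift_U]

theorem toSkewLaurent_U_mul_D :
    toSkewLaurent lam μ γ (U _ _ _ _ * D _ _ _ _) = single 1 (X 1) := by
  rw [map_mul, toSkewLaurent, lift_D, lift_U, SkewLaurent.up_mul_down]

theorem exists_toSkewLaurent_upDownPow_eq_single (n : ℤ) :
    ∃ c ≠ 0, toSkewLaurent lam μ γ (upDownPow (D _ _ _ _) (U _ _ _ _) n) =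
      single (gen _ ^ n) c := by
  obtain ⟨n, rfl | rfl⟩ := n.eq_nat_or_neg
  · obtain ⟨c, hc, h⟩ := exists_single_pow_eq_single (gen (twist lam μ γ).symm)
      (one_ne_zero (α := MvPolynomial (Fin 2) K)) n
    exact ⟨c, hc, by rw [upDownPow_natCast, map_pow, toSkewLaurent_U, h, zpow_natCast]⟩
  · obtain ⟨c, hc, h⟩ := exists_single_pow_eq_single (gen (twist lam μ γ).symm)⁻¹
      ((EmbeddingLike.map_ne_zero_iff (f := twist lam μ γ)).2 (X_ne_zero (1 : Fin 2))) n
    refine ⟨c, hc, ?_⟩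
    rw [upDownPow_neg_natCast, map_pow, toSkewLaurent, lift_D, SkewLaurent.down, h, zpow_neg,
      zpow_natCast, inv_pow]

variable {lam μ γ}
variable {e : MvPolynomial (Fin 2) K →ₐ[K] DownUpOfRoots lam μ γ}

theorem toSkewLaurent_algHom (hω : e (X 0) = omega (lam : K) (D _ _ _ _) (U _ _ _ _))
    (hx : e (X 1) = U _ _ _ _ * D _ _ _ _) (p : MvPolynomial (Fin 2) K) :
    toSkewLaurent lam μ γ (e p) = single 1 p := by
  induction p using MvPolynomial.induction_on with
  | C c =>
    rw [← algebraMap_eq, AlgHom.commutes, AlgHom.commutes, coe_algebraMap, Function.comp_apply]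
  | add p q hp hq => rw [map_add, map_add, hp, hq, single_add]
  | mul_X p i hp =>
    have hi : toSkewLaurent lam μ γ (e (X i)) = single 1 (X i) := by
      fin_cases i
      · exact hω ▸ toSkewLaurent_omega lam μ γ
      · exact hx ▸ toSkewLaurent_U_mul_D lam μ γ
    rw [map_mul, map_mul, hp, hi, single_mul_single, one_mul, one_smul]

/-- The linear map sending `(pₙ)` to `∑ pₙ Eₙ`, where `Eₙ` are the monomials `upDownPow`. -/
def ofCoeffs (e : MvPolynomial (Fin 2) K →ₐ[K] DownUpOfRoots lam μ γ) :
    (ℤ →₀ MvPolynomial (Fin 2) K) →ₗ[K] DownUpOfRoots lam μ γ :=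
  Finsupp.lsum K fun n ↦ .mulRight K (upDownPow (D _ _ _ _) (U _ _ _ _) n) ∘ₗ e.toLinearMap

theorem ofCoeffs_single (n : ℤ) (p : MvPolynomial (Fin 2) K) :
    ofCoeffs e (.single n p) = e p * upDownPow (D _ _ _ _) (U _ _ _ _) n := by
  simp [ofCoeffs]

theorem range_ofCoeffs (hω : e (X 0) = omega (lam : K) (D _ _ _ _) (U _ _ _ _))
    (hx : e (X 1) = U _ _ _ _ * D _ _ _ _) : (ofCoeffs e).range = ⊤ := by
  have mul_mem {a : DownUpOfRoots lam μ γ} {f : ℤ → ℤ}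
      (h : ∀ n, ∃ q, upDownPow (D _ _ _ _) (U _ _ _ _) n * a =
        e q * upDownPow (D _ _ _ _) (U _ _ _ _) (f n)) :
      ∀ y ∈ (ofCoeffs e).range, y * a ∈ (ofCoeffs e).range := by
    rintro _ ⟨w, rfl⟩
    induction w using Finsupp.induction_linear with
    | zero => simp
    | add v w hv hw =>
      rw [map_add, add_mul]
      exact add_mem hv hw
    | single n p =>
      obtain ⟨q, hq⟩ := h n
      exact ⟨.single (f n) (p * q), by
        rw [ofCoeffs_single, ofCoeffs_single, mul_assoc, hq, map_mul, mul_assoc]⟩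
  refine submodule_eq_top ⟨.single 0 1, ?_⟩ (mul_mem (isDownUpPair.exists_upDownPow_mul_down hω hx))
    (mul_mem (isDownUpPair.exists_upDownPow_mul_up hω hx))
  simp [ofCoeffs_single, upDownPow]

theorem exists_coeff_toSkewLaurent_ofCoeffs
    (hω : e (X 0) = omega (lam : K) (D _ _ _ _) (U _ _ _ _))
    (hx : e (X 1) = U _ _ _ _ * D _ _ _ _) (n : ℤ) :
    ∃ c ≠ 0, ∀ w, (toSkewLaurent lam μ γ (ofCoeffs e w)).coeff (gen _ ^ n) = w n * c := by
  choose c hc hE using exists_toSkewLaurent_upDownPow_eq_single lam μ γ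
  refine ⟨c n, hc n, fun w ↦ ?_⟩
  induction w using Finsupp.induction_linear with
  | zero => simp
  | add v w hv hw => simp [hv, hw, add_mul]
  | single m p =>
    classical
    rw [ofCoeffs_single, map_mul, toSkewLaurent_algHom hω hx, hE, single_mul_single, one_mul,
      one_smul, coeff_single_apply, Finsupp.single_apply, (gen_zpow_injective _).eq_iff]
    split_ifs with h
    · rw [h]
    · rw [zero_mul]

theorem toSkewLaurent_injective : Function.Injective (toSkewLaurent lam μ γ) := by
  obtain ⟨e, hω, hx⟩ := IsDownUpPair.exists_algHom
    (isDownUpPair (K := K) (α := lam + μ) (β := -(lam * μ)) (γ := γ))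
  refine (injective_iff_map_eq_zero _).2 fun y hy ↦ ?_
  obtain ⟨w, rfl⟩ := LinearMap.range_eq_top.1 (range_ofCoeffs hω hx) y
  have w_eq_zero : w = 0 := by
    ext1 n
    obtain ⟨c, hc, h⟩ := exists_coeff_toSkewLaurent_ofCoeffs hω hx n
    simpa [hy, hc] using (h w).symm
  rw [w_eq_zero, map_zero]

end DownUp

end SkewLaurent

section RightIdeal

open MvPolynomial SkewMonoidAlgebra ShiftGroup

section Polynomials

variable {R ι : Type*} [CommRing R] (i : ι) (c : R)

theorem not_isUnit_X_add_C [Nontrivial R] : ¬IsUnit (X i + C c : MvPolynomial ι R) := fun h ↦ by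
  simpa using h.map (eval fun _ ↦ -c)

theorem X_add_C_ne_zero [Nontrivial R] : (X i + C c : MvPolynomial ι R) ≠ 0 := fun h ↦ by
  simpa using congr_arg (eval fun _ ↦ 1 - c) h

theorem isRelPrime_X_X_add_C {c : R} (hc : IsUnit c) :
    IsRelPrime (X i : MvPolynomial ι R) (X i + C c) := fun _ h_X h_add ↦
  isUnit_of_dvd_unit ((dvd_add_right h_X).1 h_add) (hc.map C)

end Polynomials

theorem IsDownUpPair.up_mul_omega_add {K A : Type*} [CommRing K] [Ring A] [Algebra K A]
    {lam : K} {μ : Kˣ} {γ : K} {D U : A} (h : IsDownUpPair (lam + μ) (-(lam * μ)) γ D U) :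
    U * (omega lam D U + algebraMap K A (γ * ↑μ⁻¹)) = omega lam D U * ((↑μ⁻¹ : K) • U) := by
  have shift_eq : omega lam D U + algebraMap K A (γ * ↑μ⁻¹) =
      (↑μ⁻¹ : K) • ((μ : K) • omega lam D U + algebraMap K A γ) := by
    rw [smul_add, smul_smul, Units.inv_mul, one_smul, Algebra.smul_def, ← map_mul, mul_comm γ]
  rw [shift_eq, mul_smul_comm, (isDownUpPair_iff_semiconjBy_omega.1 h).1.eq, mul_smul_comm]

theorem isLeftRegular_of_map_injective {A B F : Type*} [Mul A] [Mul B] [FunLike F A B]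
    [MulHomClass F A B] {f : F} (hf : Function.Injective f) {a : A} (ha : IsLeftRegular (f a)) :
    IsLeftRegular a := fun x y h ↦ hf <| ha <| by
  simpa only [map_mul] using congr_arg f h

namespace DownUp

variable {K : Type} [Field K] {lam μ : Kˣ} {γ : K}

/-- The right ideal `aA + bA` of `A = A(α,β,γ)`, where `ω = DU - λUD`, `a = (ω + c)(1 + U) - c` and
`b = ω² + cω`. -/
def rightIdeal (α β γ lam c : K) : Submodule (DownUp K α β γ)ᵐᵒᵖ (DownUp K α β γ) :=
  let ω := omega lam (D K α β γ) (U K α β γ)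
  .span _ {(ω + c • 1) * (1 + U K α β γ) - c • 1, ω * ω + c • ω}

theorem rightIdeal_eq_span (α β γ lam c : K) :
    let ω := omega lam (D K α β γ) (U K α β γ)
    let s := ω + algebraMap K _ c
    rightIdeal α β γ lam c = .span _ {ω + s * U K α β γ, ω * s} := by
  intro ω s
  have fst_eq : (ω + c • 1) * (1 + U K α β γ) - c • 1 = ω + s * U K α β γ := by
    rw [← Algebra.algebraMap_eq_smul_one, mul_add, mul_one, add_right_comm, add_sub_cancel_right]
  have snd_eq : ω * ω + c • ω = ω * s := by
    rw [mul_add, Algebra.smul_def, Algebra.commutes]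
  rw [← fst_eq, ← snd_eq, rightIdeal]

theorem toSkewLaurent_omega_add (c : K) :
    toSkewLaurent lam μ γ (omega (lam : K) (D _ _ _ _) (U _ _ _ _) + algebraMap K _ c) =
      single 1 (X 0 + C c) := by
  rw [map_add, toSkewLaurent_omega, AlgHom.commutes, coe_algebraMap, Function.comp_apply,
    algebraMap_eq, single_add]

theorem nonempty_rightIdeal_prod_linearEquiv (hγ : γ ≠ 0) :
    Nonempty ((rightIdeal (lam + μ : K) (-(lam * μ)) γ lam (γ * ↑μ⁻¹) × DownUpOfRoots lam μ γ)
      ≃ₗ[(DownUpOfRoots lam μ γ)ᵐᵒᵖ] DownUpOfRoots lam μ γ × DownUpOfRoots lam μ γ) := by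
  have hc : γ * (↑μ⁻¹ : K) ≠ 0 := mul_ne_zero hγ μ⁻¹.ne_zero
  rw [rightIdeal_eq_span]
  refine nonempty_span_add_mul_prod_linearEquiv (d := algebraMap K _ (γ * ↑μ⁻¹)⁻¹)
    ((Commute.refl _).add_right (Algebra.commute_algebraMap_right _ _))
    (Algebra.commute_algebraMap_right _ _) ?_ isDownUpPair.up_mul_omega_add ?_
  · rw [add_sub_cancel_left, ← map_mul, inv_mul_cancel₀ hc, map_one]
  · refine isLeftRegular_of_map_injective (toSkewLaurent_injective (lam := lam) (μ := μ)) ?_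
    rw [map_mul, toSkewLaurent_omega, toSkewLaurent_omega_add]
    exact (isLeftRegular_single_one (X_ne_zero _)).mul
      (isLeftRegular_single_one (X_add_C_ne_zero _ _))

theorem span_toSkewLaurent_isPrincipal {c : K}
    (h : (rightIdeal (lam + μ : K) (-(lam * μ)) γ lam c).IsPrincipal) :
    (Submodule.span (SkewLaurent lam μ γ)ᵐᵒᵖ
      {single 1 (X (0 : Fin 2)) + single (gen (twist lam μ γ).symm) (X 0 + C c),
        single 1 (X 0 * (X 0 + C c))}).IsPrincipal := by
  rw [rightIdeal_eq_span] at h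
  have := span_op_pair_isPrincipal_map (toSkewLaurent lam μ γ).toRingHom h
  simpa [toSkewLaurent_omega, toSkewLaurent_U, coe_algebraMap, algebraMap_eq, single_mul_single,
    single_add, mul_add, add_mul] using this

theorem not_isPrincipal_rightIdeal (hγ : γ ≠ 0) :
    ¬(rightIdeal (lam + μ : K) (-(lam * μ)) γ lam (γ * ↑μ⁻¹)).IsPrincipal := by
  intro h
  have hc : IsUnit (γ * (↑μ⁻¹ : K)) := hγ.isUnit.mul μ⁻¹.isUnit
  refine not_isUnit_X_add_C (0 : Fin 2) (γ * (↑μ⁻¹ : K)) ?_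
  refine isUnit_of_span_op_pair_isPrincipal (not_isOfFinOrder_gen (twist lam μ γ).symm)
    (X_ne_zero _) (X_add_C_ne_zero _ _) (isRelPrime_X_X_add_C _ hc) ?_
    (span_toSkewLaurent_isPrincipal h)
  rw [gen_smul, symm_twist_X_zero_add_C, smul_eq_C_mul]
  exact (μ⁻¹.isUnit.map C).mul_left_dvd.2 dvd_rfl

end DownUp

end RightIdeal

theorem downUp_explicit_nontrivial_stablyFree_right_ideal_general
    (K : Type) [Field K] (α β γ lam μ : K) (hβ : β ≠ 0) (hγ : γ ≠ 0)
    (hsum : lam + μ = α) (hprod : lam * μ = -β) :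
    IsStablyFreeRight (DownUp K α β γ) (DownUp.rightIdeal α β γ lam (γ * μ⁻¹)) ∧
      ¬Module.Free (DownUp K α β γ)ᵐᵒᵖ (DownUp.rightIdeal α β γ lam (γ * μ⁻¹)) := by
  obtain ⟨hlam, hμ⟩ : lam ≠ 0 ∧ μ ≠ 0 := mul_ne_zero_iff.1 (hprod ▸ neg_ne_zero.2 hβ)
  lift lam to Kˣ using hlam.isUnit
  lift μ to Kˣ using hμ.isUnit
  obtain rfl : β = -(lam * μ) := by rw [hprod, neg_neg]
  subst hsum
  rw [← Units.val_inv_eq_inv_val]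
  obtain ⟨e⟩ := DownUp.nonempty_rightIdeal_prod_linearEquiv (lam := lam) (μ := μ) hγ
  refine ⟨isStablyFreeRight_of_prod_linearEquiv e, fun _ ↦ ?_⟩
  exact DownUp.not_isPrincipal_rightIdeal hγ (isPrincipal_of_free_of_prod_linearEquiv _ e)

/-- In `A = A(α,β,1)` with `β ≠ 0` and `λ, μ` the roots of `t² − αt − β`,
put `ω = DU − λUD`, `a = (ω + μ⁻¹)(1 + U) − μ⁻¹`, `b = ω² + μ⁻¹ω`. Then the right ideal
`aA + bA` is stably free but not free as a right `A`-module. -/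
theorem downUp_explicit_nontrivial_stablyFree_right_ideal
    (K : Type) [Field K] [CharZero K] (α β lam μ : K) (hβ : β ≠ 0)
    (hsum : lam + μ = α) (hprod : lam * μ = -β) :
    IsStablyFreeRight (DownUp K α β 1)
      (Submodule.span (DownUp K α β 1)ᵐᵒᵖ
        {((DownUp.D K α β 1 * DownUp.U K α β 1 -
              lam • (DownUp.U K α β 1 * DownUp.D K α β 1)) + μ⁻¹ • 1) *
            (1 + DownUp.U K α β 1) - μ⁻¹ • 1,
         (DownUp.D K α β 1 * DownUp.U K α β 1 -
              lam • (DownUp.U K α β 1 * DownUp.D K α β 1)) *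
            (DownUp.D K α β 1 * DownUp.U K α β 1 -
              lam • (DownUp.U K α β 1 * DownUp.D K α β 1)) +
          μ⁻¹ • (DownUp.D K α β 1 * DownUp.U K α β 1 -
              lam • (DownUp.U K α β 1 * DownUp.D K α β 1))}) ∧
    ¬ Module.Free (DownUp K α β 1)ᵐᵒᵖ
      (Submodule.span (DownUp K α β 1)ᵐᵒᵖ
        {((DownUp.D K α β 1 * DownUp.U K α β 1 -
              lam • (DownUp.U K α β 1 * DownUp.D K α β 1)) + μ⁻¹ • 1) *
            (1 + DownUp.U K α β 1) - μ⁻¹ • 1,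
         (DownUp.D K α β 1 * DownUp.U K α β 1 -
              lam • (DownUp.U K α β 1 * DownUp.D K α β 1)) *
            (DownUp.D K α β 1 * DownUp.U K α β 1 -
              lam • (DownUp.U K α β 1 * DownUp.D K α β 1)) +
          μ⁻¹ • (DownUp.D K α β 1 * DownUp.U K α β 1 -
              lam • (DownUp.U K α β 1 * DownUp.D K α β 1))}) := by
  exact one_mul μ⁻¹ ▸ downUp_explicit_nontrivial_stablyFree_right_ideal_general
    K α β 1 lam μ hβ one_ne_zero hsum hprod
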